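/- Let α < 0 < β, 0 < ε < 8/(β−α), and let k₁, k₂ ∈ ℤ with k₂ ≥ k₁ + 2, and p, q ∈ ℝ with ε(k₁ − 1/4) < p < ε(k₁ + 1/4) and ε(k₂ − 1/4) < q < ε(k₂ + 1/4) (so both endpoints lie in the open α-phase of g_ε). Set ℓ := q − p, σ₁ := ε(k₁ + 1/4) − p ∈ (0, ε/2), σ₂ := q − ε(k₂ − 1/4) ∈ (0, ε/2), and ℓ̃ := ε(k₂ − k₁ − 3/2), and assume (β−α)(ℓ̃ + ε/2 + 2(σ₁ + σ₂)) > 4. Set m := ε(β−α)/((β−α)(ℓ̃ + ε/2) + 4), h := (ε/2)·((β−α)(ℓ̃ + ε/2) − 4)/((β−α)(ℓ̃ + ε/2) + 4), and v := 2/ℓ + (α+β)/2 + ((β−α)/(2ℓ))(ε/2 − σ₁ − σ₂). Then there exists a Lipschitz function n : [p,q] → [−1,1] with n(p) = −1, n(q) = 1 and n'(x) = v − g(x/ε) for almost every x ∈ [p,q] if and only if m σ₂ + h ≤ σ₁ ≤ (1/m) σ₂ − h/m. -/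

import Mathlib

open MeasureTheory Set

/-- The 1-periodic forcing term: `α` within distance `1/4` of the integers, `β` otherwise. -/
noncomputable def g (α β x : ℝ) : ℝ := if |x - (round x : ℝ)| ≤ 1/4 then α else β

/-- The edge `[p,q]` with endpoint values `a`, `b` is calibrated with velocity `v` by the
Lipschitz field `n : [p,q] → [-1,1]` satisfying `n' = v - g(·/ε)` a.e. on `[p,q]`. -/
def Calibrates (α β ε p q a b v : ℝ) (n : ℝ → ℝ) : Prop :=
  (∃ K : NNReal, LipschitzOnWith K n (Icc p q)) ∧
  (∀ x ∈ Icc p q, n x ∈ Icc (-1 : ℝ) 1) ∧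
  n p = a ∧ n q = b ∧
  ∀ᵐ x ∂(volume.restrict (Icc p q)), HasDerivAt n (v - g α β (x / ε)) x

/-- Triangular wave: slope `1` within distance `1/4` of the integers, slope `-1` otherwise. -/
noncomputable def zig (y : ℝ) : ℝ := 1/4 - |(y - 1/4) - (round (y - 1/4) : ℝ)|

lemma dist_round_eq (y : ℝ) (k : ℤ) (hy : |y - k| ≤ 1/2) : |y - (round y : ℝ)| = |y - k| := by
  apply le_antisymm (round_le y k)
  by_cases hk : round y = k
  · rw [hk]
  · have h1 : (1 : ℝ) ≤ |((round y - k : ℤ) : ℝ)| := by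
      rw [← Int.cast_abs]
      exact_mod_cast Int.one_le_abs (sub_ne_zero.mpr hk)
    have h2 : |((round y - k : ℤ) : ℝ)| ≤ |y - k| + |y - (round y : ℝ)| := by
      push_cast
      calc |(round y : ℝ) - k| = |(y - k) - (y - round y)| := by congr 1; ring
        _ ≤ _ := abs_sub _ _
    linarith

lemma zig_up (y : ℝ) (k : ℤ) (h1 : k - 1/4 ≤ y) (h2 : y ≤ k + 1/4) : zig y = y - k := by
  unfold zig
  rw [dist_round_eq (y - 1/4) k (by rw [abs_le]; constructor <;> linarith),
    abs_of_nonpos (by linarith)]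
  ring

lemma zig_down (y : ℝ) (k : ℤ) (h1 : k + 1/4 ≤ y) (h2 : y ≤ k + 3/4) :
    zig y = 1/2 - (y - k) := by
  unfold zig
  rw [dist_round_eq (y - 1/4) k (by rw [abs_le]; constructor <;> linarith),
    abs_of_nonneg (by linarith)]
  ring

lemma zig_le (y : ℝ) : zig y ≤ 1/4 := by
  unfold zig
  linarith [abs_nonneg ((y - 1/4) - (round (y - 1/4) : ℝ))]

lemma le_zig (y : ℝ) : -1/4 ≤ zig y := by
  unfold zig
  linarith [abs_sub_round (y - 1/4)]

lemma zig_lip_aux (x y : ℝ) : zig x ≤ zig y + |x - y| := by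
  unfold zig
  have h1 := round_le (y - 1/4) (round (x - 1/4))
  have h2 : |(y - 1/4) - (round (x - 1/4) : ℝ)| ≤
      |(x - 1/4) - (round (x - 1/4) : ℝ)| + |x - y| := by
    calc |(y - 1/4) - (round (x - 1/4) : ℝ)|
        = |((x - 1/4) - (round (x - 1/4) : ℝ)) - (x - y)| := by congr 1; ring
      _ ≤ _ := abs_sub _ _
  linarith

lemma zig_lip : LipschitzWith 1 zig := by
  apply LipschitzWith.of_dist_le_mul
  intro x y
  rw [Real.dist_eq, Real.dist_eq, abs_le]
  have h1 := zig_lip_aux x y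
  have h2 := zig_lip_aux y x
  rw [abs_sub_comm] at h2
  simp only [NNReal.coe_one, one_mul]
  constructor <;> linarith

lemma zig_deriv (α β y : ℝ) (hy : ∀ k : ℤ, 4 * y ≠ k) :
    HasDerivAt (fun t => (β - α) / 2 * zig t) ((α + β) / 2 - g α β y) y := by
  have h0 := abs_sub_round y
  set k := round y with hk
  have e1 : y ≠ k + 1/4 := fun e => hy (4 * k + 1) (by push_cast; linarith)
  have e2 : y ≠ k - 1/4 := fun e => hy (4 * k - 1) (by push_cast; linarith)
  have e3 : y ≠ k + 1/2 := fun e => hy (4 * k + 2) (by push_cast; linarith)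
  have e4 : y ≠ k - 1/2 := fun e => hy (4 * k - 2) (by push_cast; linarith)
  rw [abs_le] at h0
  have l3 : y < k + 1/2 := lt_of_le_of_ne (by linarith) e3
  have l4 : k - 1/2 < y := lt_of_le_of_ne (by linarith) e4.symm
  unfold g
  rw [← hk]
  rcases lt_or_gt_of_ne e1 with l1 | l1
  · rcases lt_or_gt_of_ne e2 with l2 | l2
    · rw [if_neg (by rw [abs_le]; intro h; linarith [h.1])]
      have hd : HasDerivAt (fun t : ℝ => (β - α) / 2 * (1/2 - (t - ((k - 1 : ℤ) : ℝ))))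
          ((β - α) / 2 * (0 - 1)) y := by
        exact (((hasDerivAt_const y (1/2 : ℝ)).sub
          ((hasDerivAt_id y).sub_const _))).const_mul _
      have : (α + β) / 2 - β = (β - α) / 2 * (0 - 1) := by ring
      rw [this]
      refine hd.congr_of_eventuallyEq ?_
      filter_upwards [Ioo_mem_nhds l4 l2] with t ht
      rw [zig_down t (k - 1) (by push_cast; linarith [ht.1]) (by push_cast; linarith [ht.2])]
    · rw [if_pos (by rw [abs_le]; constructor <;> linarith)]
      have hd : HasDerivAt (fun t : ℝ => (β - α) / 2 * (t - (k : ℝ)))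
          ((β - α) / 2 * 1) y := by
        exact ((hasDerivAt_id y).sub_const _).const_mul _
      have : (α + β) / 2 - α = (β - α) / 2 * 1 := by ring
      rw [this]
      refine hd.congr_of_eventuallyEq ?_
      filter_upwards [Ioo_mem_nhds l2 l1] with t ht
      rw [zig_up t k ht.1.le ht.2.le]
  · rw [if_neg (by rw [abs_le]; intro h; linarith [h.2])]
    have hd : HasDerivAt (fun t : ℝ => (β - α) / 2 * (1/2 - (t - (k : ℝ))))
        ((β - α) / 2 * (0 - 1)) y := by
      exact (((hasDerivAt_const y (1/2 : ℝ)).sub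
        ((hasDerivAt_id y).sub_const _))).const_mul _
    have : (α + β) / 2 - β = (β - α) / 2 * (0 - 1) := by ring
    rw [this]
    refine hd.congr_of_eventuallyEq ?_
    filter_upwards [Ioo_mem_nhds l1 l3] with t ht
    rw [zig_down t k ht.1.le (by linarith [ht.2])]

/-- The explicit primitive. -/
noncomputable def prim (α β ε p v x : ℝ) : ℝ :=
  -1 + (v - (α + β) / 2) * (x - p) + ε * ((β - α) / 2 * zig (x / ε) - (β - α) / 2 * zig (p / ε))

lemma prim_deriv (α β ε p v x : ℝ) (hε : 0 < ε) (hx : ∀ k : ℤ, 4 * (x / ε) ≠ k) :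
    HasDerivAt (prim α β ε p v) (v - g α β (x / ε)) x := by
  have h1 : HasDerivAt (fun t : ℝ => t / ε) (1 / ε) x := (hasDerivAt_id x).div_const ε
  have h2 := (zig_deriv α β (x / ε) hx).comp x h1
  have h3 := ((((hasDerivAt_id x).sub_const p).const_mul (v - (α + β) / 2)).const_add (-1)).add
    ((h2.sub_const ((β - α) / 2 * zig (p / ε))).const_mul ε)
  have e : v - g α β (x / ε) = (v - (α + β) / 2) * 1 +
      ε * (((α + β) / 2 - g α β (x / ε)) * (1 / ε)) := by
    field_simp; ring
  rw [e]
  exact h3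

lemma prim_ae (α β ε p v : ℝ) (hε : 0 < ε) :
    ∀ᵐ x, HasDerivAt (prim α β ε p v) (v - g α β (x / ε)) x := by
  have hc : (Set.range (fun k : ℤ => ε * (k : ℝ) / 4)).Countable := Set.countable_range _
  filter_upwards [hc.ae_notMem volume] with x hx
  apply prim_deriv _ _ _ _ _ _ hε
  intro k hk
  apply hx
  refine ⟨k, ?_⟩
  simp only
  rw [← hk]
  field_simp

lemma prim_lip (α β ε p v : ℝ) : ∃ K : NNReal, LipschitzWith K (prim α β ε p v) := by
  have h1 : LipschitzWith (Real.nnabs (v - (α + β) / 2)) (fun x : ℝ => (v - (α + β) / 2) * x) := by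
    apply LipschitzWith.of_dist_le_mul
    intro x y
    simp [Real.dist_eq, ← mul_sub, abs_mul]
  have h2 : LipschitzWith (Real.nnabs (ε * ((β - α) / 2) * ε⁻¹))
      (fun x : ℝ => ε * ((β - α) / 2) * zig (x / ε)) := by
    apply LipschitzWith.of_dist_le_mul
    intro x y
    have := zig_lip.dist_le_mul (x / ε) (y / ε)
    simp only [Real.dist_eq, ← mul_sub, abs_mul, NNReal.coe_one, one_mul, ← sub_div, abs_div]
      at this ⊢
    simp only [Real.coe_nnabs, abs_mul, abs_inv, abs_div] at this ⊢
    calc _ ≤ _ := mul_le_mul_of_nonneg_left this (by positivity)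
      _ = _ := by ring
  have h3 := (h1.add h2).add (LipschitzWith.const
    (-1 - (v - (α + β) / 2) * p - ε * ((β - α) / 2 * zig (p / ε))))
  have e : prim α β ε p v = fun x => (v - (α + β) / 2) * x + ε * ((β - α) / 2) * zig (x / ε) +
      (-1 - (v - (α + β) / 2) * p - ε * ((β - α) / 2 * zig (p / ε))) := by
    funext x
    unfold prim
    ring
  rw [e]
  exact ⟨_, h3⟩

lemma eq_prim (α β ε p q v : ℝ) (hε : 0 < ε) (hpq : p ≤ q) (n : ℝ → ℝ)
    (hn : Calibrates α β ε p q (-1) 1 v n) : ∀ x ∈ Icc p q, n x = prim α β ε p v x := by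
  obtain ⟨⟨K, hK⟩, -, hnp, -, hd⟩ := hn
  obtain ⟨K', hK'⟩ := prim_lip α β ε p v
  rw [← uIcc_of_le hpq] at hK
  have hac := hK.absolutelyContinuousOnInterval.sub
    (hK'.lipschitzOnWith (s := uIcc p q)).absolutelyContinuousOnInterval
  rw [ae_restrict_iff' measurableSet_Icc] at hd
  obtain ⟨C, hC⟩ := hac.const_of_ae_hasDerivAt_zero (by
    filter_upwards [hd, prim_ae α β ε p v hε] with x h1 h2 hx
    rw [uIcc_of_le hpq] at hx
    simpa using (h1 hx).sub h2)
  rw [uIcc_of_le hpq] at hC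
  have h0 := hC p ⟨le_rfl, hpq⟩
  have hp : prim α β ε p v p = -1 := by simp [prim]
  intro x hx
  have h1 := hC x hx
  simp only [Pi.sub_apply] at h0 h1
  linarith

set_option maxHeartbeats 2000000 in
theorem stmt10 (α β ε p q : ℝ) (k₁ k₂ : ℤ) (hα : α < 0) (hβ : 0 < β)
    (hε0 : 0 < ε) (hε : ε < 8 / (β - α)) (hk : k₁ + 2 ≤ k₂)
    (hp1 : ε * (k₁ - 1/4) < p) (hp2 : p < ε * (k₁ + 1/4))
    (hq1 : ε * (k₂ - 1/4) < q) (hq2 : q < ε * (k₂ + 1/4))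
    (σ₁ σ₂ ltil m h v : ℝ)
    (hσ₁ : σ₁ = ε * (k₁ + 1/4) - p) (hσ₂ : σ₂ = q - ε * (k₂ - 1/4))
    (hltil : ltil = ε * ((k₂ : ℝ) - k₁ - 3/2))
    (hcond : 4 < (β - α) * (ltil + ε / 2 + 2 * (σ₁ + σ₂)))
    (hm : m = ε * (β - α) / ((β - α) * (ltil + ε / 2) + 4))
    (hh : h = ε / 2 * ((β - α) * (ltil + ε / 2) - 4) / ((β - α) * (ltil + ε / 2) + 4))
    (hv : v = 2 / (q - p) + (α + β) / 2 + (β - α) / (2 * (q - p)) * (ε / 2 - σ₁ - σ₂)) :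
    (∃ n : ℝ → ℝ, Calibrates α β ε p q (-1) 1 v n) ↔
      (m * σ₂ + h ≤ σ₁ ∧ σ₁ ≤ (1 / m) * σ₂ - h / m) := by
  have hkr : (k₁ : ℝ) + 2 ≤ k₂ := by exact_mod_cast hk
  have hk2 : ε * k₁ + 2 * ε ≤ ε * k₂ := by nlinarith
  have hpq : p < q := by linarith
  have hD : 0 < β - α := by linarith
  have hεD : ε * (β - α) < 8 := by rwa [lt_div_iff₀ hD] at hε
  -- the rescaled triangular wave
  have hup : ∀ (k : ℤ) (x : ℝ), ε * (k - 1/4) ≤ x → x ≤ ε * (k + 1/4) →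
      ε * zig (x / ε) = x - ε * k := by
    intro k x h1 h2
    rw [zig_up (x / ε) k (by rw [le_div_iff₀ hε0]; linarith) (by rw [div_le_iff₀ hε0]; linarith)]
    field_simp
  have hdn : ∀ (k : ℤ) (x : ℝ), ε * (k + 1/4) ≤ x → x ≤ ε * (k + 3/4) →
      ε * zig (x / ε) = ε / 2 - (x - ε * k) := by
    intro k x h1 h2
    rw [zig_down (x / ε) k (by rw [le_div_iff₀ hε0]; linarith)
      (by rw [div_le_iff₀ hε0]; linarith)]
    field_simp
  have hzu : ∀ x : ℝ, ε * zig (x / ε) ≤ ε / 4 := fun x => by nlinarith [zig_le (x / ε)]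
  have hzl : ∀ x : ℝ, -ε / 4 ≤ ε * zig (x / ε) := fun x => by nlinarith [le_zig (x / ε)]
  obtain ⟨D, hDdef⟩ : ∃ D, D = β - α := ⟨_, rfl⟩
  obtain ⟨c, hcdef⟩ : ∃ c, c = v - (α + β) / 2 := ⟨_, rfl⟩
  obtain ⟨L, hLdef⟩ : ∃ L, L = ltil + ε / 2 := ⟨_, rfl⟩
  have hL : L = ε * k₂ - ε * k₁ - ε := by rw [hLdef, hltil]; ring
  have hl : q - p = L + ε / 2 + σ₁ + σ₂ := by rw [hL, hσ₁, hσ₂]; ring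
  rw [← hLdef, ← hDdef] at hcond hm hh
  rw [← hDdef] at hD hεD
  have hlpos : 0 < q - p := by linarith
  have hc : c * (q - p) = 2 + D / 2 * (ε / 2 - σ₁ - σ₂) := by
    rw [hcdef, hv, ← hDdef]; field_simp; ring
  have hZp := hup k₁ p hp1.le hp2.le
  have hZq := hup k₂ q hq1.le hq2.le
  have hP : ∀ x, prim α β ε p v x = -1 + c * (x - p) + D / 2 * (ε * zig (x / ε) - (p - ε * k₁)) := by
    intro x
    rw [← hZp, hcdef, hDdef]; unfold prim; ring
  have hPq : prim α β ε p v q = 1 := by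
    rw [hP, hZq, hc, hσ₁, hσ₂]; ring
  have hPp : prim α β ε p v p = -1 := by rw [hP, hZp]; ring
  have hσ₁p : 0 < σ₁ := by rw [hσ₁]; linarith
  have hσ₂p : 0 < σ₂ := by rw [hσ₂]; linarith
  have hσ₁l : σ₁ < ε / 2 := by rw [hσ₁]; linarith
  have hσ₂l : σ₂ < ε / 2 := by rw [hσ₂]; linarith
  have hLpos : 0 < L := by linarith
  have hDL : 0 < D * L + 4 := by positivity
  have hcpos : 0 < c := by
    have : 0 < c * (q - p) := by rw [hc]; nlinarith
    exact pos_of_mul_pos_left this hlpos.le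
  have hcβ : c - D / 2 ≤ 0 := by
    have : (c - D / 2) * (q - p) ≤ 0 := by
      rw [sub_mul, hc, hl]; nlinarith
    exact nonpos_of_mul_nonpos_left this hlpos
  have hPB : prim α β ε p v (ε * (k₁ + 3/4)) =
      -1 + c * (σ₁ + ε / 2) + D / 2 * (σ₁ - ε / 2) := by
    rw [hP, hdn k₁ (ε * (k₁ + 3/4)) (by linarith) le_rfl, hσ₁]; ring
  have hPA : prim α β ε p v (ε * (k₂ - 3/4)) =
      1 - c * (σ₂ + ε / 2) - D / 2 * (σ₂ - ε / 2) := by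
    have h1 := hdn (k₂ - 1) (ε * (k₂ - 3/4)) (by push_cast; linarith) (by push_cast; linarith)
    push_cast at h1
    rw [← hPq, hP, hP, h1, hZq, hσ₂]; ring
  have hmpos : 0 < m := by rw [hm]; positivity
  have hkey : ∀ s t : ℝ, L + ε / 2 + s + t = q - p → s + t = σ₁ + σ₂ →
      (0 ≤ c * (s + ε / 2) + D / 2 * (s - ε / 2) ↔ m * t + h ≤ s) := by
    intro s t hst hst'
    have e1 : (c * (s + ε / 2) + D / 2 * (s - ε / 2)) * (q - p) =
        (D * L + 4) * (s - (m * t + h)) / 2 := by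
      have e2 : (D * L + 4) * (m * t + h) = ε * D * t + ε / 2 * (D * L - 4) := by
        rw [hm, hh]; field_simp
      have hc' : c * (q - p) = 2 + D / 2 * (ε / 2 - s - t) := by rw [hc]; linear_combination D / 2 * hst'
      linear_combination (s + ε / 2) * hc' - D / 2 * (s - ε / 2) * hst + e2 / 2
    constructor
    · intro h0
      have := mul_nonneg h0 hlpos.le
      rw [e1] at this
      have h3 : 0 ≤ (D * L + 4) * (s - (m * t + h)) := by linarith
      linarith [nonneg_of_mul_nonneg_right h3 hDL]
    · intro h0
      have : 0 ≤ (c * (s + ε / 2) + D / 2 * (s - ε / 2)) * (q - p) := by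
        rw [e1]
        have := mul_nonneg hDL.le (sub_nonneg.mpr h0)
        linarith
      exact nonneg_of_mul_nonneg_left this hlpos
  have hk1 := hkey σ₁ σ₂ hl.symm rfl
  have hk2' := hkey σ₂ σ₁ (by linarith) (by ring)
  have hsecond : σ₁ ≤ (1 / m) * σ₂ - h / m ↔ m * σ₁ + h ≤ σ₂ := by
    have : (1 / m) * σ₂ - h / m = (σ₂ - h) / m := by ring
    rw [this, le_div_iff₀ hmpos]
    constructor <;> intro h <;> linarith
  rw [hsecond, ← hk1, ← hk2']
  constructor
  · rintro ⟨n, hn⟩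
    have heq := eq_prim α β ε p q v hε0 hpq.le n hn
    have hb := hn.2.1
    have m1 : ε * (k₁ + 3/4) ∈ Icc p q := ⟨by linarith, by linarith⟩
    have m2 : ε * (k₂ - 3/4) ∈ Icc p q := ⟨by linarith, by linarith⟩
    have b1 := (hb _ m1).1
    have b2 := (hb _ m2).2
    rw [heq _ m1, hPB] at b1
    rw [heq _ m2, hPA] at b2
    constructor <;> linarith
  · rintro ⟨h1, h2⟩
    obtain ⟨K, hK⟩ := prim_lip α β ε p v
    refine ⟨prim α β ε p v, ⟨K, hK.lipschitzOnWith⟩, ?_, hPp, hPq,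
      ae_restrict_of_ae (prim_ae α β ε p v hε0)⟩
    rintro x ⟨hx1, hx2⟩
    constructor
    · rcases le_total x (ε * (k₁ + 1/4)) with hA | hA
      · rw [hP, hup k₁ x (by linarith) hA]
        have := mul_nonneg (by linarith : 0 ≤ c + D / 2) (sub_nonneg.mpr hx1)
        linarith
      · have hB0 : -1 ≤ prim α β ε p v (ε * (k₁ + 3/4)) := by rw [hPB]; linarith
        refine hB0.trans ?_
        rw [hP, hP, hdn k₁ (ε * (k₁ + 3/4)) (by linarith) le_rfl]
        rcases le_total x (ε * (k₁ + 3/4)) with hB | hB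
        · rw [hdn k₁ x hA hB]
          have := mul_nonneg_of_nonpos_of_nonpos hcβ (sub_nonpos.mpr hB)
          linarith
        · have e1 := mul_nonneg hcpos.le (sub_nonneg.mpr hB)
          have e2 := mul_nonneg hD.le (sub_nonneg.mpr (hzl x))
          linarith
    · rcases le_total (ε * (k₂ - 1/4)) x with hA | hA
      · rw [← hPq, hP, hP, hZq, hup k₂ x hA (by linarith)]
        have := mul_nonneg (by linarith : 0 ≤ c + D / 2) (sub_nonneg.mpr hx2)
        linarith
      · have hB0 : prim α β ε p v (ε * (k₂ - 3/4)) ≤ 1 := by rw [hPA]; linarith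
        refine le_trans ?_ hB0
        have hz := hdn (k₂ - 1) (ε * (k₂ - 3/4)) (by push_cast; linarith) (by push_cast; linarith)
        push_cast at hz
        rw [hP, hP, hz]
        rcases le_total (ε * (k₂ - 3/4)) x with hB | hB
        · have hz2 := hdn (k₂ - 1) x (by push_cast; linarith) (by push_cast; linarith)
          push_cast at hz2
          rw [hz2]
          have := mul_nonneg_of_nonpos_of_nonpos hcβ (sub_nonpos.mpr hB)
          linarith
        · have e1 := mul_nonneg hcpos.le (sub_nonneg.mpr hB)
          have e2 := mul_nonneg hD.le (sub_nonneg.mpr (hzu x))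
          linarith
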